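/- arXiv:1412.8399 — 2 statements merged into one kernel-verified Lean document; each statement's English description precedes it below -/
import Mathlib

section
/- There is no sentence ψ in the monadic second-order language MS₀ (with set variables, predicates ⊆, Sing, Ind, connectives, and set quantifiers) such that a finite matroid M satisfies ψ (interpreting Ind by the independent sets of M) if and only if M is representable over at least one field. -/
open Set

/-- Formulas of the monadic second-order language `MS₀`, with (monadic, set-valued)
variables given by de Bruijn indices: atomic formulas `Xᵢ ⊆ Xⱼ`, `Sing(Xᵢ)`,
`Ind(Xᵢ)`, negation, conjunction, and existential and universal set quantifiers.
`MS0 n` is the type of formulas with free variables among `X₀, …, X_{n-1}`. -/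
inductive MS0 : ℕ → Type
  | subset {n : ℕ} (i j : Fin n) : MS0 n
  | sing {n : ℕ} (i : Fin n) : MS0 n
  | ind {n : ℕ} (i : Fin n) : MS0 n
  | not {n : ℕ} (φ : MS0 n) : MS0 n
  | and {n : ℕ} (φ ψ : MS0 n) : MS0 n
  | ex {n : ℕ} (φ : MS0 (n + 1)) : MS0 n
  | all {n : ℕ} (φ : MS0 (n + 1)) : MS0 n

/-- Satisfaction of an `MS₀` formula in a matroid `M`, under a valuation sending each
variable to a subset of the ground set: `⊆` is interpreted as set inclusion, `Sing`
as having cardinality one, `Ind` as independence in `M`, and quantifiers range over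
subsets of the ground set of `M`. -/
def MS0.Sat {α : Type*} (M : Matroid α) : ∀ {n : ℕ}, MS0 n → (Fin n → Set α) → Prop
  | _, .subset i j, v => v i ⊆ v j
  | _, .sing i, v => (v i).encard = 1
  | _, .ind i, v => M.Indep (v i)
  | _, .not φ, v => ¬ MS0.Sat M φ v
  | _, .and φ ψ, v => MS0.Sat M φ v ∧ MS0.Sat M ψ v
  | _, .ex φ, v => ∃ Y ⊆ M.E, MS0.Sat M φ (Fin.cons Y v)
  | _, .all φ, v => ∀ Y ⊆ M.E, MS0.Sat M φ (Fin.cons Y v)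

/-- A matroid `M` is representable over a field `K` if there is an assignment of
vectors to the elements of the ground set realising the independent sets of `M` as the
linearly independent families. -/
def RepOver (K : Type) [Field K] {α : Type*} (M : Matroid α) : Prop :=
  ∃ (ι : Type) (φ : α → (ι → K)),
    ∀ I : Set α, I ⊆ M.E → (M.Indep I ↔ LinearIndependent K (fun x : I => φ x.val))

/-- A matroid is representable if it is representable over at least one field. -/
def Representable {α : Type*} (M : Matroid α) : Prop :=
  ∃ (K : Type) (_ : Field K), RepOver K M

/-!
There are only finitely many types of rank `k`, and the type of a direct sum is computed from the
types of its summands. Hence for every sentence there are two primes `p ≠ q` such that the matroids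
of all vectors of `F_p³` and `F_q³` are interchangeable as summands. However, the sum of two copies
of the matroid of `F_p³` is representable, whereas the sum of the matroids of `F_q³` and `F_p³` is
not, because the matroid of `F³` determines the characteristic of the fields over which it is
representable. For this, given a representation `ψ` of a vector space and a vector `o` outside a
plane `P`, write `ψ (o + v)` for `v ∈ P` as `ψ o + f v` up to scaling, where `f v` is proportional
to `ψ v`. The line of `o + v + w` is the intersection of the planes spanned by `o + v, w` and by
`o + w, v`, so `f` is additive. An injective additive map preserves the characteristic.
-/

section LinearAlgebra

open Submodule

section LinearIndepOn

variable {F V : Type*} [DivisionRing F] [AddCommGroup V] [Module F V]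

lemma maximal_linearIndepOn_id_iff {B : Set V} :
    Maximal (LinearIndepOn F id) B ↔ LinearIndepOn F id B ∧ span F B = ⊤ := by
  refine and_congr_right fun hB =>
    ⟨fun hmax => eq_top_iff'.2 fun x => ?_, fun htop J hJ hBJ x hx => ?_⟩
  · exact hB.mem_span_iff_id.2 fun hx => hmax hx (subset_insert x B) (mem_insert x B)
  · exact hB.mem_span_iff_id.1 (htop ▸ mem_top) (hJ.mono (insert_subset hx hBJ))

lemma exists_linearIndepOn_id_insert {I B : Set V} (hI : LinearIndepOn F id I)
    (hImax : ¬ Maximal (LinearIndepOn F id) I) (hB : Maximal (LinearIndepOn F id) B) :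
    ∃ x ∈ B \ I, LinearIndepOn F id (insert x I) := by
  by_contra! hcon
  have hBI : B ⊆ span F I := fun x hx =>
    hI.mem_span_iff_id.2 fun hxI => by_contra fun hx' => hcon x ⟨hx, hx'⟩ hxI
  refine hImax (maximal_linearIndepOn_id_iff.2 ⟨hI, top_le_iff.1 ?_⟩)
  exact (maximal_linearIndepOn_id_iff.1 hB).2 ▸ span_le.2 hBI

lemma linearIndepOn_image_iff {R W α β : Type*} [Semiring R] [AddCommMonoid W] [Module R W]
    {f : α → β} (hf : Function.Injective f) {φ : β → W} {I : Set α} :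
    LinearIndepOn R φ (f '' I) ↔ LinearIndepOn R (φ ∘ f) I :=
  ⟨fun h => h.comp_of_image hf.injOn, fun h => h.image_of_comp⟩

lemma linearIndepOn_sumElim_iff {R V W α β : Type*} [Ring R] [AddCommGroup V] [Module R V]
    [AddCommGroup W] [Module R W] {φ : α → V} {θ : β → W} {I : Set (α ⊕ β)} :
    LinearIndepOn R (Sum.elim (LinearMap.inl R V W ∘ φ) (LinearMap.inr R V W ∘ θ)) I ↔
      LinearIndepOn R φ (Sum.inl ⁻¹' I) ∧ LinearIndepOn R θ (Sum.inr ⁻¹' I) := by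
  have hdisj : Disjoint (span R (LinearMap.inl R V W ∘ φ '' (Sum.inl ⁻¹' I)))
      (span R (LinearMap.inr R V W ∘ θ '' (Sum.inr ⁻¹' I))) := by
    refine LinearMap.isCompl_range_inl_inr.disjoint.mono (span_le.2 ?_) (span_le.2 ?_)
    · exact image_subset_iff.2 fun a _ => LinearMap.mem_range_self _ _
    · exact image_subset_iff.2 fun b _ => LinearMap.mem_range_self _ _
  conv_lhs => rw [← image_preimage_inl_union_image_preimage_inr I]
  rw [linearIndepOn_union_iff disjoint_image_inl_image_inr, ← image_comp, ← image_comp,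
    Sum.elim_comp_inl, Sum.elim_comp_inr, and_iff_left hdisj,
    linearIndepOn_image_iff Sum.inl_injective, linearIndepOn_image_iff Sum.inr_injective,
    Sum.elim_comp_inl, Sum.elim_comp_inr,
    LinearMap.linearIndepOn_iff_of_injOn _ LinearMap.inl_injective.injOn,
    LinearMap.linearIndepOn_iff_of_injOn _ LinearMap.inr_injective.injOn]

end LinearIndepOn

section PreservesIndep

variable {F K V W : Type*} [DivisionRing F] [AddCommGroup V] [Module F V]
  [DivisionRing K] [AddCommGroup W] [Module K W]

variable (F K) in
/-- A map between vector spaces over possibly different fields such that the linearly independent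
sets of the source are exactly those whose image is a linearly independent family: in other words,
a representation over `K` of the matroid of all vectors of an `F`-vector space. -/
def PreservesIndep (ψ : V → W) : Prop :=
  ∀ I : Set V, LinearIndepOn F id I ↔ LinearIndepOn K ψ I

variable {ψ : V → W}

namespace PreservesIndep

lemma map_eq_zero_iff (hψ : PreservesIndep F K ψ) {v : V} : ψ v = 0 ↔ v = 0 := by
  simpa using (hψ {v}).symm.not

lemma mem_span_image_iff (hψ : PreservesIndep F K ψ) {s : Set V} {v : V} :
    ψ v ∈ span K (ψ '' s) ↔ v ∈ span F s := by
  obtain ⟨t, hts, -, hst, ht⟩ :=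
    exists_linearIndepOn_id_extension (linearIndepOn_empty F id) (empty_subset s)
  have iff_of_indep (x : V) : ψ x ∈ span K (ψ '' t) ↔ x ∈ span F t := by
    rw [((hψ t).1 ht).mem_span_iff, ht.mem_span_iff_id, hψ]
  have hspan : span F s = span F t := (span_le.2 hst).antisymm (span_mono hts)
  have hspan_image : span K (ψ '' s) = span K (ψ '' t) := by
    refine (span_le.2 ?_).antisymm (span_mono (image_mono hts))
    rintro _ ⟨x, hx, rfl⟩
    exact (iff_of_indep x).2 (hst hx)
  rw [hspan, hspan_image, iff_of_indep]

lemma mem_span_singleton_iff (hψ : PreservesIndep F K ψ) {v w : V} :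
    ψ w ∈ K ∙ ψ v ↔ w ∈ F ∙ v := by
  simpa only [image_singleton] using hψ.mem_span_image_iff (s := {v}) (v := w)

lemma mem_span_pair_iff (hψ : PreservesIndep F K ψ) {u v w : V} :
    ψ w ∈ span K {ψ u, ψ v} ↔ w ∈ span F {u, v} := by
  simpa only [image_pair] using hψ.mem_span_image_iff (s := {u, v}) (v := w)

end PreservesIndep

variable (K ψ) in
/-- The vector `x` is the displacement of `ψ (o + v)` from the origin `ψ o`: it lies on the line of
`ψ v`, and adding it to `ψ o` yields a vector proportional to `ψ (o + v)`. -/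
structure IsOffset (o v : V) (x : W) : Prop where
  mem_span : x ∈ K ∙ ψ v
  span_add_eq : K ∙ (ψ o + x) = K ∙ ψ (o + v)

namespace PreservesIndep

lemma exists_isOffset (hψ : PreservesIndep F K ψ) {o v : V} (ho : o ∉ F ∙ v) :
    ∃ x, IsOffset K ψ o v x := by
  have mem : ψ o ∈ span K {ψ (o + v), ψ v} := hψ.mem_span_pair_iff.2 <|
    mem_span_pair.2 ⟨1, -1, by simp⟩
  obtain ⟨c, d, hcd⟩ := mem_span_pair.1 mem
  have hc : c ≠ 0 := by
    rintro rfl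
    refine ho (hψ.mem_span_singleton_iff.1 (mem_span_singleton.2 ⟨d, ?_⟩))
    rw [← hcd, zero_smul, zero_add]
  refine ⟨-d • ψ v, smul_mem _ _ (mem_span_singleton_self _), ?_⟩
  rw [← hcd, add_assoc, ← add_smul, add_neg_cancel, zero_smul, add_zero,
    span_singleton_smul_eq hc.isUnit]

end PreservesIndep

namespace IsOffset

lemma ne_zero (hψ : PreservesIndep F K ψ) {o v : V} {x : W} (hx : IsOffset K ψ o v x)
    (hv : v ∉ F ∙ o) : x ≠ 0 := by
  rintro rfl
  have mem : o + v ∈ F ∙ o := by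
    rw [← hψ.mem_span_singleton_iff (K := K), ← add_zero (ψ o), hx.span_add_eq]
    exact mem_span_singleton_self _
  exact hv (by simpa using sub_mem mem (mem_span_singleton_self o))

lemma sub_mem_span (hψ : PreservesIndep F K ψ) {o v w : V} {x z : W}
    (ho : o ∉ span F {v, w}) (hx : IsOffset K ψ o v x) (hz : IsOffset K ψ o (v + w) z) :
    z - x ∈ K ∙ ψ w := by
  have mem : ψ o + z ∈ span K {ψ w, ψ o + x} := by
    have mem_left : ψ (o + (v + w)) ∈ span K {ψ w, ψ (o + v)} :=
      hψ.mem_span_pair_iff.2 (mem_span_pair.2 ⟨1, 1, by rw [one_smul, one_smul]; abel⟩)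
    rw [span_insert, ← hx.span_add_eq, ← span_insert, ← span_singleton_le_iff_mem,
      ← hz.span_add_eq, span_singleton_le_iff_mem] at mem_left
    exact mem_left
  obtain ⟨a, c, hac⟩ := mem_span_pair.1 mem
  have hxvw : x ∈ span K {ψ v, ψ w} := span_mono (by simp) hx.mem_span
  have hzvw : z ∈ span K {ψ v, ψ w} :=
    (span_singleton_le_iff_mem _ _).2
      (hψ.mem_span_pair_iff.2 (mem_span_pair.2 ⟨1, 1, by simp⟩)) hz.mem_span
  have hwvw : ψ w ∈ span K {ψ v, ψ w} := subset_span (by simp)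
  have hc : 1 - c = 0 := by
    by_contra hc
    refine ho (hψ.mem_span_pair_iff.1 (((span K {ψ v, ψ w}).smul_mem_iff hc).1 ?_))
    have heq : (1 - c) • ψ o = a • ψ w + c • x - z := by
      rw [sub_smul, one_smul, sub_eq_sub_iff_add_eq_add, ← hac, smul_add]
      abel
    rw [heq]
    exact sub_mem (add_mem (smul_mem _ _ hwvw) (smul_mem _ _ hxvw)) hzvw
  refine mem_span_singleton.2 ⟨a, ?_⟩
  rw [← sub_eq_zero.1 hc, one_smul] at hac
  rw [eq_sub_iff_add_eq, ← add_right_inj (ψ o), ← hac]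
  abel

lemma add_eq (hψ : PreservesIndep F K ψ) {o v w : V} {x y z : W}
    (ho : o ∉ span F {v, w}) (hvw : v ∉ F ∙ w) (hx : IsOffset K ψ o v x)
    (hy : IsOffset K ψ o w y) (hz : IsOffset K ψ o (v + w) z) : z = x + y := by
  have hv : ψ v ≠ 0 := fun h => hvw (hψ.map_eq_zero_iff.1 h ▸ zero_mem _)
  have hdisj : Disjoint (K ∙ ψ w) (K ∙ ψ v) :=
    (disjoint_span_singleton' hv).2 (hψ.mem_span_singleton_iff.not.2 hvw)
  have mem_w : z - x - y ∈ K ∙ ψ w := sub_mem (hx.sub_mem_span hψ ho hz) hy.mem_span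
  have mem_v : z - y - x ∈ K ∙ ψ v :=
    sub_mem (hy.sub_mem_span hψ (pair_comm v w ▸ ho) (add_comm v w ▸ hz)) hx.mem_span
  rw [sub_right_comm] at mem_v
  rw [← sub_eq_zero, ← sub_sub]
  exact disjoint_def.1 hdisj _ mem_w mem_v

end IsOffset

namespace PreservesIndep

lemma exists_injective_addMonoidHom (hψ : PreservesIndep F K ψ) {P : Submodule F V} {o : V}
    (ho : o ≠ 0) (hPo : Disjoint P (F ∙ o)) (hP : ¬ P.IsPrincipal) :
    ∃ f : P →+ W, Function.Injective f := by
  have hoP : o ∉ P := (disjoint_span_singleton' ho).1 hPo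
  have notMem_span (s : Set V) (hs : s ⊆ P) : o ∉ span F s := fun h => hoP (span_le.2 hs h)
  choose f hf using fun v : P => hψ.exists_isOffset (notMem_span {(v : V)} (by simp))
  have map_add_of_notMem (v w : P) (hvw : (v : V) ∉ F ∙ (w : V)) : f (v + w) = f v + f w :=
    (hf v).add_eq hψ (notMem_span _ (by simp [insert_subset_iff])) hvw (hf w) (hf (v + w))
  have map_add (v w : P) : f (v + w) = f v + f w := by
    -- For collinear `v` and `w`, move both sides off their line by adding some `b`.
    by_cases hvw : (v : V) ∈ F ∙ (w : V)
    · obtain ⟨b, hb⟩ : ∃ b : P, (b : V) ∉ F ∙ (w : V) := by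
        by_contra! hw
        exact hP ⟨w, le_antisymm (fun b hb => hw ⟨b, hb⟩)
          ((span_singleton_le_iff_mem _ _).2 w.2)⟩
      have hbv : (b : V) ∉ F ∙ (v : V) := fun h =>
        hb ((span_singleton_le_iff_mem _ _).2 hvw h)
      have hbvw : (b : V) ∉ F ∙ ((v + w : P) : V) := fun h => hb
        ((span_singleton_le_iff_mem _ _).2 (add_mem hvw (mem_span_singleton_self _)) h)
      have hbv_w : ((b + v : P) : V) ∉ F ∙ (w : V) := fun h => hb
        (by simpa using sub_mem h hvw)
      refine add_left_cancel (a := f b) ?_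
      rw [← map_add_of_notMem b _ hbvw, ← add_assoc, map_add_of_notMem _ _ hbv_w,
        map_add_of_notMem _ _ hbv, add_assoc]
    · exact map_add_of_notMem v w hvw
  refine ⟨AddMonoidHom.mk' f map_add, (injective_iff_map_eq_zero _).2 fun v hv => ?_⟩
  by_contra hv0
  refine (hf v).ne_zero hψ (fun hvo => hv0 ?_) hv
  exact Subtype.ext (disjoint_def.1 hPo _ v.2 hvo)

end PreservesIndep

variable (F K) in
lemma ringChar_eq_of_injective_addMonoidHom [Nontrivial V] {f : V →+ W}
    (hf : Function.Injective f) : ringChar F = ringChar K := by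
  obtain ⟨a, ha⟩ := exists_ne (0 : V)
  have cast_eq_zero_iff (n : ℕ) : (n : F) = 0 ↔ (n : K) = 0 := by
    rw [← smul_eq_zero_iff_left ha, ← smul_eq_zero_iff_left ((map_ne_zero_iff f hf).2 ha),
      Nat.cast_smul_eq_nsmul, Nat.cast_smul_eq_nsmul, ← map_nsmul, map_eq_zero_iff f hf]
  exact ringChar.eq_iff.2 ⟨fun n => by rw [cast_eq_zero_iff, ringChar.spec]⟩

lemma PreservesIndep.ringChar_eq (hψ : PreservesIndep F K ψ) (hV : 2 < Module.rank F V) :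
    ringChar F = ringChar K := by
  have : Nontrivial V := rank_pos_iff_nontrivial.1 (zero_le_two.trans_lt hV)
  obtain ⟨o, ho⟩ := exists_ne (0 : V)
  obtain ⟨P, hP⟩ := Submodule.exists_isCompl (F ∙ o)
  have not_isPrincipal : ¬ P.IsPrincipal := by
    rintro ⟨w, rfl⟩
    refine hV.not_ge ?_
    have hspan : span F {o, w} = ⊤ := by rw [span_insert, hP.sup_eq_top]
    rw [← rank_top F V, ← hspan]
    refine (rank_span_le _).trans ((Cardinal.mk_insert_le).trans ?_)
    rw [Cardinal.mk_singleton, one_add_one_eq_two]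
  obtain ⟨f, hf⟩ := hψ.exists_injective_addMonoidHom ho hP.disjoint.symm not_isPrincipal
  have : Nontrivial P := nontrivial_iff_ne_bot.2 fun h => not_isPrincipal (h ▸ inferInstance)
  exact ringChar_eq_of_injective_addMonoidHom F K hf

end PreservesIndep

end LinearAlgebra

section LinearMatroid

variable {F V : Type*} [DivisionRing F] [AddCommGroup V] [Module F V]

variable (F V) in
/-- The matroid of all vectors of a vector space, with the linearly independent sets as its
independent sets. For `V = F³` its simplification is the projective plane over `F`. -/
def linearMatroid : Matroid V :=
  (IndepMatroid.ofFinitary univ (LinearIndepOn F id) (linearIndepOn_empty F id)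
    (fun _ _ hJ hIJ => hJ.mono hIJ)
    (fun _ _ => exists_linearIndepOn_id_insert)
    linearIndepOn_of_finite
    fun _ _ => subset_univ _).matroid

end LinearMatroid

lemma subset_sum_ground_iff {α β : Type*} {M : Matroid α} {N : Matroid β} {I : Set (α ⊕ β)} :
    I ⊆ (M.sum N).E ↔ Sum.inl ⁻¹' I ⊆ M.E ∧ Sum.inr ⁻¹' I ⊆ N.E := by
  rw [M.sum_ground, ← sumEquiv_symm_apply (s := (M.E, N.E))]
  exact sumEquiv.le_symm_apply

section IsRepresentation

variable {α β K V W : Type*} [DivisionRing K] [AddCommGroup V] [Module K V]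
  [AddCommGroup W] [Module K W] {M : Matroid α} {N : Matroid β}

variable (K) in
/-- The vectors `φ` represent the matroid `M` over `K`. In contrast to `RepOver`, they may live in
any vector space over `K`. -/
def IsRepresentation (M : Matroid α) (φ : α → W) : Prop :=
  ∀ I ⊆ M.E, M.Indep I ↔ LinearIndepOn K φ I

lemma isRepresentation_id : IsRepresentation K (linearMatroid K V) id := fun _ _ => Iff.rfl

namespace IsRepresentation

lemma preservesIndep {F V : Type*} [DivisionRing F] [AddCommGroup V] [Module F V] {ψ : V → W}
    (h : IsRepresentation K (linearMatroid F V) ψ) : PreservesIndep F K ψ :=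
  fun I => h I (subset_univ I)

lemma comp_injective {φ : β → W} (h : IsRepresentation K N φ) {f : α → β}
    (hf : Function.Injective f) (hE : f '' M.E ⊆ N.E) (hI : ∀ I, M.Indep I ↔ N.Indep (f '' I)) :
    IsRepresentation K M (φ ∘ f) := fun I hIM => by
  rw [hI, h _ ((image_mono hIM).trans hE), linearIndepOn_image_iff hf]

lemma of_sum_left {φ : α ⊕ β → W} (h : IsRepresentation K (M.sum N) φ) :
    IsRepresentation K M (φ ∘ Sum.inl) :=
  h.comp_injective Sum.inl_injective (by simp)
    fun I => by simp [preimage_image_eq I Sum.inl_injective]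

lemma of_sum_right {φ : α ⊕ β → W} (h : IsRepresentation K (M.sum N) φ) :
    IsRepresentation K N (φ ∘ Sum.inr) :=
  h.comp_injective Sum.inr_injective (by simp)
    fun I => by simp [preimage_image_eq I Sum.inr_injective]

lemma of_mapEmbedding {f : α ↪ β} {φ : β → W} (h : IsRepresentation K (M.mapEmbedding f) φ) :
    IsRepresentation K M (φ ∘ f) :=
  h.comp_injective f.injective (by simp)
    fun I => by simp [preimage_image_eq I f.injective]

lemma mapEmbedding {f : α ↪ β} {φ : α → W} (h : IsRepresentation K M φ) :
    IsRepresentation K (M.mapEmbedding f) (Function.extend f φ 0) := by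
  intro I hI
  obtain ⟨J, hJ, rfl⟩ := subset_image_iff.1 hI
  rw [linearIndepOn_image_iff f.injective, Function.extend_comp f.injective, ← h J hJ]
  simp [preimage_image_eq J f.injective]

lemma sum {φ : α → V} {θ : β → W} (hM : IsRepresentation K M φ) (hN : IsRepresentation K N θ) :
    IsRepresentation K (M.sum N)
      (Sum.elim (LinearMap.inl K V W ∘ φ) (LinearMap.inr K V W ∘ θ)) := by
  intro I hI
  obtain ⟨hIM, hIN⟩ := subset_sum_ground_iff.1 hI
  rw [linearIndepOn_sumElim_iff, M.sum_indep_iff, hM _ hIM, hN _ hIN]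

lemma repOver {K W : Type} [Field K] [AddCommGroup W] [Module K W] {φ : α → W}
    (h : IsRepresentation K M φ) : RepOver K M := by
  let b := Module.Basis.ofVectorSpace K W
  let coords : W →ₗ[K] (Module.Basis.ofVectorSpaceIndex K W → K) :=
    Finsupp.lcoeFun ∘ₗ b.repr.toLinearMap
  have hcoords : Function.Injective coords := DFunLike.coe_injective.comp b.repr.injective
  exact ⟨_, coords ∘ φ, fun I hI => (h I hI).trans
    (coords.linearIndepOn_iff_of_injOn hcoords.injOn).symm⟩

end IsRepresentation

end IsRepresentation

lemma representable_mapEmbedding_iff {α β : Type*} {M : Matroid α} {f : α ↪ β} :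
    Representable (M.mapEmbedding f) ↔ Representable M := by
  refine ⟨?_, ?_⟩
  · rintro ⟨K, _, ι, φ, hφ⟩
    exact ⟨K, _, ι, φ ∘ f, IsRepresentation.of_mapEmbedding hφ⟩
  · rintro ⟨K, _, ι, φ, hφ⟩
    exact ⟨K, _, ι, _, IsRepresentation.mapEmbedding hφ⟩

lemma representable_linearMatroid_sum_self (F V : Type) [Field F] [AddCommGroup V] [Module F V] :
    Representable ((linearMatroid F V).sum (linearMatroid F V)) :=
  ⟨F, _, (isRepresentation_id.sum isRepresentation_id).repOver⟩

lemma ringChar_eq_of_representable_sum {F F' V V' : Type*} [DivisionRing F] [AddCommGroup V]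
    [Module F V] [DivisionRing F'] [AddCommGroup V'] [Module F' V']
    (hV : 2 < Module.rank F V) (hV' : 2 < Module.rank F' V')
    (h : Representable ((linearMatroid F V).sum (linearMatroid F' V'))) :
    ringChar F = ringChar F' := by
  obtain ⟨K, _, ι, φ, hφ : IsRepresentation K _ φ⟩ := h
  rw [hφ.of_sum_left.preservesIndep.ringChar_eq hV, hφ.of_sum_right.preservesIndep.ringChar_eq hV']

section RankType

/-- The quantifier-free type of an `n`-tuple of subsets of the ground set of a matroid. It also
records which of the sets are empty, because this is needed to compute `sing` in a direct sum. -/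
@[ext]
structure AtomicType (n : ℕ) where
  subset : Fin n → Fin n → Prop
  empty : Fin n → Prop
  sing : Fin n → Prop
  indep : Fin n → Prop

instance (n : ℕ) : Finite (AtomicType n) :=
  Finite.of_injective (fun t : AtomicType n => (t.subset, t.empty, t.sing, t.indep))
    fun _ _ h => by simpa [AtomicType.ext_iff] using h

/-- The types of rank `k` in `n` set variables: a type of rank `k + 1` consists of a
quantifier-free type and of the set of rank `k` types of the one-variable extensions. -/
def RankType : ℕ → ℕ → Type
  | 0, n => AtomicType n
  | k + 1, n => AtomicType n × Set (RankType k (n + 1))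

instance finite_rankType : ∀ k n, Finite (RankType k n)
  | 0, n => inferInstanceAs (Finite (AtomicType n))
  | k + 1, n =>
    have := finite_rankType k (n + 1)
    inferInstanceAs (Finite (AtomicType n × Set (RankType k (n + 1))))

variable {α β : Type*} {k n : ℕ}

/-- The quantifier-free type of the tuple `v` in the matroid `M`. -/
def atomicType (M : Matroid α) (v : Fin n → Set α) : AtomicType n where
  subset i j := v i ⊆ v j
  empty i := v i = ∅
  sing i := (v i).encard = 1
  indep i := M.Indep (v i)

/-- The rank `k` type of the tuple `v` in the matroid `M`. It determines which formulas of
quantifier rank at most `k` the tuple satisfies. -/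
def rankType (M : Matroid α) : ∀ (k : ℕ) {n : ℕ}, (Fin n → Set α) → RankType k n
  | 0, _, v => atomicType M v
  | k + 1, _, v => (atomicType M v, (fun Y => rankType M k (Fin.cons Y v)) '' 𝒫 M.E)

/-- The quantifier-free part of a rank `k` type. -/
def RankType.atomic : ∀ {k n : ℕ}, RankType k n → AtomicType n
  | 0, _, t => t
  | _ + 1, _, t => t.1

lemma atomic_rankType (M : Matroid α) (v : Fin n → Set α) :
    (rankType M k v).atomic = atomicType M v := by
  cases k <;> rfl

/-- The quantifier rank of a formula, that is, the maximal nesting depth of its quantifiers. -/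
def MS0.quantifierRank : ∀ {n : ℕ}, MS0 n → ℕ
  | _, .subset _ _ | _, .sing _ | _, .ind _ => 0
  | _, .not φ => φ.quantifierRank
  | _, .and φ ψ => max φ.quantifierRank ψ.quantifierRank
  | _, .ex φ | _, .all φ => φ.quantifierRank + 1

universe u in
lemma exists_set_rankType_sat_iff {n : ℕ} (φ : MS0 n) {k : ℕ} (hk : φ.quantifierRank ≤ k) :
    ∃ S : Set (RankType k n), ∀ {α : Type u} (M : Matroid α) (v : Fin n → Set α),
      MS0.Sat M φ v ↔ rankType M k v ∈ S := by
  induction φ generalizing k with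
  | subset i j =>
    exact ⟨{t | t.atomic.subset i j}, fun M v => by rw [mem_ofPred, atomic_rankType]; rfl⟩
  | sing i => exact ⟨{t | t.atomic.sing i}, fun M v => by rw [mem_ofPred, atomic_rankType]; rfl⟩
  | ind i => exact ⟨{t | t.atomic.indep i}, fun M v => by rw [mem_ofPred, atomic_rankType]; rfl⟩
  | not φ ih =>
    obtain ⟨S, hS⟩ := ih hk
    exact ⟨Sᶜ, fun M v => (hS M v).not⟩
  | and φ ψ ihφ ihψ =>
    obtain ⟨S, hS⟩ := ihφ (le_of_max_le_left hk)
    obtain ⟨T, hT⟩ := ihψ (le_of_max_le_right hk)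
    exact ⟨S ∩ T, fun M v => and_congr (hS M v) (hT M v)⟩
  | ex φ ih =>
    obtain ⟨k, rfl⟩ := Nat.exists_eq_add_of_le' (Nat.one_le_of_lt hk)
    obtain ⟨S, hS⟩ := ih (Nat.le_of_succ_le_succ hk)
    exact ⟨{t | ∃ s ∈ t.2, s ∈ S}, fun M v =>
      (exists_congr fun Y => and_congr_right fun _ => hS M _).trans exists_mem_image.symm⟩
  | all φ ih =>
    obtain ⟨k, rfl⟩ := Nat.exists_eq_add_of_le' (Nat.one_le_of_lt hk)
    obtain ⟨S, hS⟩ := ih (Nat.le_of_succ_le_succ hk)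
    exact ⟨{t | ∀ s ∈ t.2, s ∈ S}, fun M v =>
      (forall₂_congr fun Y _ => hS M _).trans forall_mem_image.symm⟩

/-- The quantifier-free type in a direct sum of matroids of a tuple with the given types in the
summands. -/
def AtomicType.sum (s t : AtomicType n) : AtomicType n where
  subset i j := s.subset i j ∧ t.subset i j
  empty i := s.empty i ∧ t.empty i
  sing i := s.sing i ∧ t.empty i ∨ s.empty i ∧ t.sing i
  indep i := s.indep i ∧ t.indep i

/-- The rank `k` type in a direct sum of matroids of a tuple with the given types in the
summands. -/
def RankType.sum : ∀ {k n : ℕ}, RankType k n → RankType k n → RankType k n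
  | 0, _, s, t => AtomicType.sum s t
  | _ + 1, _, s, t => (s.1.sum t.1, image2 RankType.sum s.2 t.2)

lemma enat_add_eq_one_iff {a b : ℕ∞} : a + b = 1 ↔ a = 1 ∧ b = 0 ∨ a = 0 ∧ b = 1 := by
  cases a with
  | top => simp
  | coe a =>
    cases b with
    | top => simp
    | coe b => norm_cast; omega

lemma encard_eq_one_iff_preimage {A : Set (α ⊕ β)} :
    A.encard = 1 ↔ (Sum.inl ⁻¹' A).encard = 1 ∧ Sum.inr ⁻¹' A = ∅ ∨
      Sum.inl ⁻¹' A = ∅ ∧ (Sum.inr ⁻¹' A).encard = 1 := by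
  conv_lhs => rw [← image_preimage_inl_union_image_preimage_inr A]
  rw [encard_union_eq disjoint_image_inl_image_inr, Sum.inl_injective.encard_image,
    Sum.inr_injective.encard_image, enat_add_eq_one_iff, encard_eq_zero, encard_eq_zero]

lemma atomicType_sum (M : Matroid α) (N : Matroid β) (v : Fin n → Set (α ⊕ β)) :
    atomicType (M.sum N) v =
      (atomicType M (preimage Sum.inl ∘ v)).sum (atomicType N (preimage Sum.inr ∘ v)) := by
  ext i
  · exact sumEquiv.le_iff_le.symm
  · exact (map_eq_bot_iff sumEquiv).symm.trans Prod.mk_inj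
  · exact encard_eq_one_iff_preimage
  · exact M.sum_indep_iff N

lemma powerset_sum_ground (M : Matroid α) (N : Matroid β) :
    𝒫 (M.sum N).E = image2 (fun A B => Sum.inl '' A ∪ Sum.inr '' B) (𝒫 M.E) (𝒫 N.E) := by
  ext Y
  constructor
  · intro hY
    obtain ⟨hYM, hYN⟩ := subset_sum_ground_iff.1 hY
    exact ⟨_, hYM, _, hYN, image_preimage_inl_union_image_preimage_inr Y⟩
  · rintro ⟨A, hA, B, hB, rfl⟩
    exact M.sum_ground N ▸ union_subset_union (image_mono hA) (image_mono hB)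

/-- The Feferman–Vaught composition theorem for direct sums of matroids. -/
lemma rankType_sum (M : Matroid α) (N : Matroid β) (k : ℕ) {n : ℕ} (v : Fin n → Set (α ⊕ β)) :
    rankType (M.sum N) k v =
      (rankType M k (preimage Sum.inl ∘ v)).sum (rankType N k (preimage Sum.inr ∘ v)) := by
  induction k generalizing n with
  | zero => exact atomicType_sum M N v
  | succ k ih =>
    have ih_cons (A : Set α) (B : Set β) :
        rankType (M.sum N) k (Fin.cons (Sum.inl '' A ∪ Sum.inr '' B) v) =
          (rankType M k (Fin.cons A (preimage Sum.inl ∘ v))).sum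
            (rankType N k (Fin.cons B (preimage Sum.inr ∘ v))) := by
      rw [ih, Fin.comp_cons, Fin.comp_cons]
      simp [preimage_image_eq _ Sum.inl_injective, preimage_image_eq _ Sum.inr_injective]
    refine Prod.ext (atomicType_sum M N v) ?_
    simp only [rankType, RankType.sum, powerset_sum_ground, image_image2, image2_image_left,
      image2_image_right, ih_cons]

universe u in
lemma exists_ne_forall_sat_sum_iff {ι : Type*} [Infinite ι] {α : ι → Type u}
    (M : ∀ i, Matroid (α i)) (φ : MS0 0) :
    ∃ i j, i ≠ j ∧ ∀ {β : Type u} (N : Matroid β),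
      MS0.Sat ((M i).sum N) φ (fun x => x.elim0) ↔ MS0.Sat ((M j).sum N) φ (fun x => x.elim0) := by
  obtain ⟨i, j, hij, heq⟩ := Finite.exists_ne_map_eq_of_infinite
    fun i => rankType (M i) φ.quantifierRank (fun x => x.elim0)
  obtain ⟨S, hS⟩ := exists_set_rankType_sat_iff φ le_rfl
  refine ⟨i, j, hij, fun N => ?_⟩
  have comp_eq {γ δ : Type u} (f : Set γ → Set δ) :
      (f ∘ fun x : Fin 0 => x.elim0) = fun x => x.elim0 := Subsingleton.elim _ _
  rw [hS, hS, rankType_sum, rankType_sum, comp_eq, comp_eq, comp_eq, comp_eq, heq]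

lemma sat_mapEmbedding_iff {M : Matroid α} {f : α ↪ β} {φ : MS0 n} {v : Fin n → Set α} :
    MS0.Sat (M.mapEmbedding f) φ (image f ∘ v) ↔ MS0.Sat M φ v := by
  induction φ with
  | subset i j => exact image_subset_image_iff f.injective
  | sing i => exact iff_of_eq (congrArg (· = 1) (f.injective.encard_image _))
  | ind i => simp [MS0.Sat, preimage_image_eq _ f.injective]
  | not φ ih => exact ih.not
  | and φ ψ ihφ ihψ => exact and_congr ihφ ihψ
  | ex φ ih =>
    simp only [MS0.Sat, Matroid.mapEmbedding_ground_eq, exists_subset_image_iff,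
      ← Fin.comp_cons, ih]
  | all φ ih =>
    simp only [MS0.Sat, Matroid.mapEmbedding_ground_eq, forall_subset_image_iff,
      ← Fin.comp_cons, ih]

end RankType

/-- There is no sentence `ψ` of `MS₀` such that a finite matroid satisfies `ψ`
(interpreting `Ind` by its independent sets) if and only if it is representable over
at least one field. -/
theorem no_MS0_sentence_characterises_representability :
    ¬ ∃ ψ : MS0 0, ∀ M : Matroid ℕ, M.E.Finite →
      (MS0.Sat M ψ (fun i => i.elim0) ↔ Representable M) := by
  rintro ⟨ψ, hψ⟩
  have sat_iff {α : Type} [Finite α] (M : Matroid α) :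
      MS0.Sat M ψ (fun i => i.elim0) ↔ Representable M := by
    obtain ⟨f⟩ := nonempty_embedding_nat α
    rw [← representable_mapEmbedding_iff (f := f), ← hψ _ (toFinite (f '' M.E)),
      ← sat_mapEmbedding_iff (f := f), Subsingleton.elim (image f ∘ _)]
  let V (p : Nat.Primes) := Fin 3 → ZMod p
  have (p : Nat.Primes) : Fact (p : ℕ).Prime := ⟨p.2⟩
  have two_lt_rank (p : Nat.Primes) : 2 < Module.rank (ZMod p) (V p) := by
    rw [rank_fin_fun]
    norm_num
  obtain ⟨p, q, hpq, sat_sum_iff⟩ :=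
    exists_ne_forall_sat_sum_iff (fun p : Nat.Primes => linearMatroid (ZMod p) (V p)) ψ
  refine hpq (Subtype.ext ?_)
  have hpp := (sat_iff _).2 (representable_linearMatroid_sum_self (ZMod p) (V p))
  have hqp := (sat_iff _).1 ((sat_sum_iff _).1 hpp)
  have hchar := ringChar_eq_of_representable_sum (two_lt_rank q) (two_lt_rank p) hqp
  rw [ZMod.ringChar_zmod_n, ZMod.ringChar_zmod_n] at hchar
  exact hchar.symm
end

section
/- Let K be a field, s ≥ 3 an integer, and α ∈ K \ {0} an element of multiplicative order greater than 2s(s−1). Then the proper amalgam, along the common rank-2 five-point line ℓ = {a, b, x, y, z}, of the hoop matroid M(Γ(K, s, α)) and the loop matroid M(Δ(K, s, α)) is representable over K. -/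
open Set

/-- The rank (as an extended natural number) of a set `X` in a matroid `M`. -/
noncomputable def Matroid.erank' {α : Type*} (M : Matroid α) (X : Set α) : ℕ∞ :=
  ⨆ I ∈ {I : Set α | M.Indep I ∧ I ⊆ X}, I.encard

/-- The rank function of the proper amalgam of `M₁` and `M₂`. -/
noncomputable def amalRank {α : Type*} (M₁ M₂ : Matroid α) (X : Set α) : ℕ∞ :=
  ⨅ Y ∈ {Y : Set α | X ⊆ Y ∧ Y ⊆ M₁.E ∪ M₂.E},
    M₁.erank' (Y ∩ M₁.E) + M₂.erank' (Y ∩ M₂.E) - M₁.erank' (Y ∩ (M₁.E ∩ M₂.E))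

/-- `A` is the proper amalgam of `M₁` and `M₂`. -/
def IsProperAmalgam {α : Type*} (M₁ M₂ A : Matroid α) : Prop :=
  A.E = M₁.E ∪ M₂.E ∧ ∀ X ⊆ M₁.E ∪ M₂.E, A.erank' X = amalRank M₁ M₂ X

/-- The common ground-set elements of the gain graphs `Γ(K, s, α)` (the hoop gain
graph) and `Δ(L, t, β)` (the loop gain graph) are `a, b, x, y, z`; in addition
`Γ` has loops `a_i` (`hloop`) and the parallel edges `x_i` (`hx`), `y_i` (`hy`),
while `Δ` has the extra edge `g`, loops `b_i` (`lloop`) and the parallel edges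
`e_i` (`le`), `f_i` (`lf`). -/
inductive AmalEdge (s t : ℕ) : Type
  | a | b | x | y | z | g
  | hloop (i : Fin (s - 1))
  | hx (i : Fin s)
  | hy (i : Fin s)
  | lloop (i : Fin (2 * t - 2))
  | le (i : Fin (2 * t - 1))
  | lf (i : Fin (2 * t - 1))
  deriving DecidableEq

/-- The edges of the hoop gain graph `Γ(K, s, α)`. -/
def inHoop {s t : ℕ} : AmalEdge s t → Prop
  | .g | .lloop _ | .le _ | .lf _ => False
  | _ => True

/-- The edges of the loop gain graph `Δ(L, t, β)`. -/
def inLoopGraph {s t : ℕ} : AmalEdge s t → Prop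
  | .hloop _ | .hx _ | .hy _ => False
  | _ => True

/-- The column of the matrix `D(G, σ)` corresponding to an edge oriented from
vertex `u` to vertex `v` with gain `γ`: entry `1` in row `u`, `-γ` in row `v`, zeros
elsewhere (for an unbalanced loop, `u = v` and the column is the standard basis
vector at `u`). -/
def col {K : Type*} [Field K] (u v : ℕ) (γ : K) : ℕ → K :=
  fun i => if i = u then 1 else if i = v then -γ else 0

/-- The columns of the matrix `D(Γ(K, s, α), σ)` of the hoop gain graph on vertices
`u₁, …, u_{s+1}` (indexed `0, …, s`): loops `a` at `u₁`, `b` at `u_{s+1}`, `a_i` at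
`u_i` (`2 ≤ i ≤ s`), all with gain `α`; edges `x_i` (gain `1`) and `y_i` (gain `α`)
from `u_i` to `u_{i+1}`; edges `x, y, z` from `u₁` to `u_{s+1}` with gains
`1, α^(s-1), α^s`. Edges not in `Γ` are sent to the zero vector. -/
def hoopVec (K : Type*) [Field K] (a : K) (s t : ℕ) : AmalEdge s t → ℕ → K
  | .a => col 0 0 a
  | .b => col s s a
  | .x => col 0 s 1
  | .y => col 0 s (a ^ (s - 1))
  | .z => col 0 s (a ^ s)
  | .hloop i => col ((i : ℕ) + 1) ((i : ℕ) + 1) a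
  | .hx i => col (i : ℕ) ((i : ℕ) + 1) 1
  | .hy i => col (i : ℕ) ((i : ℕ) + 1) a
  | _ => fun _ => 0

/-- The columns of the matrix `D(Δ(L, t, β), σ)` of the loop gain graph on vertices
`v₁, …, v_{2t}` (indexed `0, …, 2t-1`): loops `a` at `v₁`, `b` at `v_{2t}`, `b_i` at
`v_i` (`2 ≤ i ≤ 2t-1`), all with gain `β`; edges `e_i` (gain `1`) and `f_i` (gain
`β^(t-1)` for `1 ≤ i ≤ t` and `β^t` for `t+1 ≤ i ≤ 2t-1`) from `v_i` to `v_{i+1}`;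
edges `x, y, z, g` from `v₁` to `v_{2t}` with gains `1, β^(t-1), β^t, β^(t(t-1))`.
Edges not in `Δ` are sent to the zero vector. -/
def loopVec (K : Type*) [Field K] (b : K) (s t : ℕ) : AmalEdge s t → ℕ → K
  | .a => col 0 0 b
  | .b => col (2 * t - 1) (2 * t - 1) b
  | .x => col 0 (2 * t - 1) 1
  | .y => col 0 (2 * t - 1) (b ^ (t - 1))
  | .z => col 0 (2 * t - 1) (b ^ t)
  | .g => col 0 (2 * t - 1) (b ^ (t * (t - 1)))
  | .lloop i => col ((i : ℕ) + 1) ((i : ℕ) + 1) b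
  | .le i => col (i : ℕ) ((i : ℕ) + 1) 1
  | .lf i => col (i : ℕ) ((i : ℕ) + 1) (if (i : ℕ) < t then b ^ (t - 1) else b ^ t)
  | _ => fun _ => 0

/-- `M` is the hoop matroid `M(Γ(K, s, α))`: the gain-graphic matroid of the hoop
gain graph, realised as the column matroid of the matrix `D(Γ(K, s, α), σ)`. -/
def IsHoopMatroid (K : Type*) [Field K] (a : K) (s t : ℕ)
    (M : Matroid (AmalEdge s t)) : Prop :=
  M.E = {e | inHoop e} ∧
    ∀ I : Set (AmalEdge s t),
      M.Indep I ↔ I ⊆ {e | inHoop e} ∧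
        LinearIndependent K (fun x : I => hoopVec K a s t x.val)

/-- `M` is the loop matroid `M(Δ(L, t, β))`: the gain-graphic matroid of the loop
gain graph, realised as the column matroid of the matrix `D(Δ(L, t, β), σ)`. -/
def IsLoopMatroid (K : Type*) [Field K] (b : K) (s t : ℕ)
    (M : Matroid (AmalEdge s t)) : Prop :=
  M.E = {e | inLoopGraph e} ∧
    ∀ I : Set (AmalEdge s t),
      M.Indep I ↔ I ⊆ {e | inLoopGraph e} ∧
        LinearIndependent K (fun x : I => loopVec K b s t x.val)

open scoped Pointwise

/-!
Identify `u₁` with `v₁` and `u_{s+1}` with `v_{2s}`; the columns of the glued gain graph represent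
the proper amalgam. By the modular law for subspaces, the vector rank agrees with the rank
function of the amalgam as soon as, on every flat `Y`, the spans of the two sides of `Y` meet only
in the span of the common elements of `Y`. The two sides share only the end vertices, so a vector
in both spans is a combination of the loops `a` and `b`, hence, up to scaling, one of these loops or
an edge between the end vertices. If it is an edge and the loops are not spanned, then following a
path on the hoop side shows that its gain is `α ^ k` with `k ≤ s`, and on the loop side that it is
`α ^ m`, where `m ≤ 2 s (s - 1)` is the exponent of `x`, `y`, `z` or `g` or a sum of exponents
`s - 1` and `s` of distinct edges `f_i`. Since `α` has large order, `k = m`, and `m ≤ s` leaves only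
`0`, `s - 1` and `s`: the edge is `x`, `y` or `z`.
-/

theorem erank'_eq_eRk {ι : Type*} (M : Matroid ι) (X : Set ι) : M.erank' X = M.eRk X := by
  apply le_antisymm
  · exact iSup₂_le fun I hI => hI.1.encard_le_eRk_of_subset hI.2
  · obtain ⟨I, hI⟩ := M.exists_isBasis' X
    rw [← hI.encard_eq_eRk]
    exact le_iSup₂ (f := fun J (_ : J ∈ {J : Set ι | M.Indep J ∧ J ⊆ X}) => J.encard)
      I ⟨hI.indep, hI.subset⟩

section Representation

variable {K ι V W : Type*} [DivisionRing K] [AddCommGroup V] [Module K V] [AddCommGroup W]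
  [Module K W]

/-- The vectors `v` represent the matroid `M` over `K`; the values of `v` off the ground set of `M`
are irrelevant. -/
def Represents (K : Type*) [DivisionRing K] {ι V : Type*} [AddCommGroup V] [Module K V]
    (v : ι → V) (M : Matroid ι) : Prop :=
  ∀ ⦃I : Set ι⦄, I ⊆ M.E → (M.Indep I ↔ LinearIndepOn K v I)

theorem Represents.congr {v w : ι → V} {M : Matroid ι} (h : Represents K v M)
    (hvw : EqOn v w M.E) : Represents K w M :=
  fun _ hI => (h hI).trans (linearIndepOn_congr (hvw.mono hI))

theorem Represents.map {v : ι → V} {M : Matroid ι} (h : Represents K v M) {f : V →ₗ[K] W}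
    (hf : Function.Injective f) : Represents K (f ∘ v) M :=
  fun _ hI => (h hI).trans (f.linearIndepOn_iff_of_injOn hf.injOn).symm

theorem linearIndepOn_iff_finrank_eq_encard [Finite ι] {v : ι → V} {I : Set ι} :
    LinearIndepOn K v I ↔ ((v '' I).finrank K : ℕ∞) = I.encard := by
  have := Fintype.ofFinite I
  rw [LinearIndepOn, linearIndependent_iff_card_eq_finrank_span, ← image_eq_range, encard,
    ENat.card_eq_coe_fintype_card, Nat.cast_inj, eq_comm]

theorem finrank_image_mono [Finite ι] (v : ι → V) {X Y : Set ι} (h : X ⊆ Y) :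
    (v '' X).finrank K ≤ (v '' Y).finrank K :=
  have := FiniteDimensional.span_of_finite K (toFinite (v '' Y))
  Submodule.finrank_mono (Submodule.span_mono (image_mono h))

theorem represents_iff_eRk_eq_finrank [Finite ι] {v : ι → V} {M : Matroid ι} :
    Represents K v M ↔ ∀ X ⊆ M.E, M.eRk X = (v '' X).finrank K := by
  refine ⟨fun h X hX => ?_, fun h I hI => ?_⟩
  · obtain ⟨I, hI⟩ := M.exists_isBasis X
    apply le_antisymm
    · have hIv : LinearIndepOn K v I := (h hI.indep.subset_ground).1 hI.indep
      rw [← hI.encard_eq_eRk, ← linearIndepOn_iff_finrank_eq_encard.1 hIv]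
      exact_mod_cast finrank_image_mono v hI.subset
    · obtain ⟨J, hJX, -, hXJ, hJ⟩ :=
        exists_linearIndepOn_extension (linearIndepOn_empty K v) (empty_subset X)
      have hspan : Submodule.span K (v '' J) = Submodule.span K (v '' X) :=
        le_antisymm (Submodule.span_mono (image_mono hJX)) (Submodule.span_le.2 hXJ)
      rw [Set.finrank, ← hspan, ← Set.finrank, linearIndepOn_iff_finrank_eq_encard.1 hJ]
      exact ((h (hJX.trans hX)).2 hJ).encard_le_eRk_of_subset hJX
  · rw [Matroid.indep_iff_eRk_eq_encard_of_finite (toFinite I), h I hI,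
      linearIndepOn_iff_finrank_eq_encard]

theorem finrank_image_union_add_finrank_inf [Finite ι] (v : ι → V) (X Y : Set ι) :
    (v '' (X ∪ Y)).finrank K +
        Module.finrank K ↥(Submodule.span K (v '' X) ⊓ Submodule.span K (v '' Y)) =
      (v '' X).finrank K + (v '' Y).finrank K := by
  have := FiniteDimensional.span_of_finite K (toFinite (v '' X))
  have := FiniteDimensional.span_of_finite K (toFinite (v '' Y))
  rw [image_union, Set.finrank, Submodule.span_union]
  exact Submodule.finrank_sup_add_finrank_inf_eq _ _

theorem span_image_inter_le_inf (v : ι → V) (X Y : Set ι) :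
    Submodule.span K (v '' (X ∩ Y)) ≤ Submodule.span K (v '' X) ⊓ Submodule.span K (v '' Y) :=
  le_inf (Submodule.span_mono (image_mono inter_subset_left))
    (Submodule.span_mono (image_mono inter_subset_right))

theorem finrank_image_union_add_inter_le [Finite ι] (v : ι → V) (X Y : Set ι) :
    (v '' (X ∪ Y)).finrank K + (v '' (X ∩ Y)).finrank K ≤
      (v '' X).finrank K + (v '' Y).finrank K := by
  have := FiniteDimensional.span_of_finite K (toFinite (v '' X))
  rw [← finrank_image_union_add_finrank_inf v X Y]
  gcongr
  exact Submodule.finrank_mono (span_image_inter_le_inf v X Y)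

theorem finrank_image_union_add_inter_eq [Finite ι] {v : ι → V} {X Y : Set ι}
    (h : Submodule.span K (v '' X) ⊓ Submodule.span K (v '' Y) ≤ Submodule.span K (v '' (X ∩ Y))) :
    (v '' (X ∪ Y)).finrank K + (v '' (X ∩ Y)).finrank K =
      (v '' X).finrank K + (v '' Y).finrank K := by
  rw [← finrank_image_union_add_finrank_inf v X Y, h.antisymm (span_image_inter_le_inf v X Y),
    Set.finrank, Set.finrank]

end Representation

section Amalgam

variable {K ι V : Type*} [DivisionRing K] [AddCommGroup V] [Module K V] [Finite ι] {v : ι → V}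
  {M₁ M₂ A : Matroid ι}

/-- Every point of the intersection of the spans of the two sides of a flat `Y` of the
configuration `v` is already spanned by the common elements of `Y`. Here `E₁` and `E₂` are the
ground sets of the two sides. -/
def ModularOnFlats (K : Type*) [DivisionRing K] {ι V : Type*} [AddCommGroup V] [Module K V]
    (v : ι → V) (E₁ E₂ : Set ι) : Prop :=
  ∀ Y ⊆ E₁ ∪ E₂, (∀ e ∈ E₁ ∪ E₂, v e ∈ Submodule.span K (v '' Y) → e ∈ Y) →
    Submodule.span K (v '' (Y ∩ E₁)) ⊓ Submodule.span K (v '' (Y ∩ E₂)) ≤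
      Submodule.span K (v '' (Y ∩ (E₁ ∩ E₂)))

theorem amalRank_eq_iInf_finrank (h₁ : Represents K v M₁) (h₂ : Represents K v M₂) (X : Set ι) :
    amalRank M₁ M₂ X = ⨅ Y ∈ {Y : Set ι | X ⊆ Y ∧ Y ⊆ M₁.E ∪ M₂.E},
      (((v '' (Y ∩ M₁.E)).finrank K + (v '' (Y ∩ M₂.E)).finrank K -
        (v '' (Y ∩ (M₁.E ∩ M₂.E))).finrank K : ℕ) : ℕ∞) := by
  rw [represents_iff_eRk_eq_finrank] at h₁ h₂
  simp only [amalRank, erank'_eq_eRk, h₁ _ inter_subset_right, h₂ _ inter_subset_right,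
    h₁ _ (inter_subset_right.trans inter_subset_left)]
  norm_cast

theorem amalRank_eq_finrank (h₁ : Represents K v M₁) (h₂ : Represents K v M₂)
    (hmod : ModularOnFlats K v M₁.E M₂.E) {X : Set ι} (hX : X ⊆ M₁.E ∪ M₂.E) :
    amalRank M₁ M₂ X = (v '' X).finrank K := by
  have split {Y : Set ι} (hY : Y ⊆ M₁.E ∪ M₂.E) : Y ∩ M₁.E ∪ Y ∩ M₂.E = Y := by
    rw [← inter_union_distrib_left, inter_eq_left.2 hY]
  rw [amalRank_eq_iInf_finrank h₁ h₂]
  apply le_antisymm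
  · set Y := {e ∈ M₁.E ∪ M₂.E | v e ∈ Submodule.span K (v '' X)}
    have hY : Y ⊆ M₁.E ∪ M₂.E := sep_subset _ _
    have hXY : X ⊆ Y := fun e he => ⟨hX he, Submodule.subset_span (mem_image_of_mem v he)⟩
    have hspan : Submodule.span K (v '' Y) = Submodule.span K (v '' X) :=
      le_antisymm (Submodule.span_le.2 (image_subset_iff.2 fun e he => he.2))
        (Submodule.span_mono (image_mono hXY))
    have hflat := hmod Y hY fun e he heY => ⟨he, hspan ▸ heY⟩
    rw [inter_inter_distrib_left] at hflat
    have hrank := finrank_image_union_add_inter_eq hflat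
    rw [split hY, Set.finrank, hspan, ← Set.finrank, ← inter_inter_distrib_left] at hrank
    exact (iInf₂_le Y ⟨hXY, hY⟩).trans_eq (by rw [← hrank, Nat.add_sub_cancel])
  · refine le_iInf₂ fun Y hY => Nat.cast_le.2 ?_
    have hsub := finrank_image_union_add_inter_le (K := K) v (Y ∩ M₁.E) (Y ∩ M₂.E)
    rw [split hY.2, ← inter_inter_distrib_left] at hsub
    exact (finrank_image_mono v hY.1).trans (Nat.le_sub_of_add_le hsub)

theorem IsProperAmalgam.represents (hA : IsProperAmalgam M₁ M₂ A) (h₁ : Represents K v M₁)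
    (h₂ : Represents K v M₂) (hmod : ModularOnFlats K v M₁.E M₂.E) : Represents K v A := by
  rw [represents_iff_eRk_eq_finrank, hA.1]
  intro X hX
  rw [← erank'_eq_eRk, hA.2 X hX, amalRank_eq_finrank h₁ h₂ hmod hX]

end Amalgam

section Columns

variable {K : Type*} [Field K]

theorem col_self (u : ℕ) (γ : K) : col u u γ = Pi.single u 1 := by
  ext i
  simp only [col, Pi.single_apply]
  split_ifs <;> rfl

theorem col_of_ne {u v : ℕ} (h : u ≠ v) (γ : K) :
    col u v γ = Pi.single u 1 - γ • Pi.single v 1 := by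
  ext i
  simp only [col, Pi.single_apply, Pi.sub_apply, Pi.smul_apply, smul_eq_mul]
  split_ifs <;> simp_all

theorem map_col_eq_zero_iff {u v : ℕ} (h : u ≠ v) (f : (ℕ → K) →ₗ[K] K) (γ : K) :
    f (col u v γ) = 0 ↔ f (Pi.single u 1) = γ * f (Pi.single v 1) := by
  rw [col_of_ne h, map_sub, map_smul, smul_eq_mul, sub_eq_zero]

/-- The coordinate projection onto the vertices `0, …, n`. -/
def truncate (K : Type*) [Field K] (n : ℕ) : (ℕ → K) →ₗ[K] (ℕ → K) :=
  LinearMap.pi fun j => if j ≤ n then LinearMap.proj j else 0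

theorem truncate_single_of_le {n j : ℕ} (h : j ≤ n) :
    truncate K n (Pi.single j 1) = Pi.single j 1 := by
  ext i
  by_cases hi : i ≤ n
  · simp [truncate, hi]
  · simp [truncate, hi, show i ≠ j by lia]

theorem truncate_single_of_lt {n j : ℕ} (h : n < j) : truncate K n (Pi.single j 1) = 0 := by
  ext i
  by_cases hi : i ≤ n
  · simp [truncate, hi, show i ≠ j by lia]
  · simp [truncate, hi]

/-- The columns of the gain graph that consists of a path `0, 1, …, n` whose edge `i — i + 1`
occurs with all gains in `G i`, of chords `0 — n` with all gains in `C`, and of an unbalanced loop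
at every vertex. -/
def chordedPathColumns (n : ℕ) (G : ℕ → Set K) (C : Set K) : Set (ℕ → K) :=
  {w | (∃ j, w = Pi.single j 1) ∨ (∃ i < n, ∃ γ ∈ G i, w = col i (i + 1) γ) ∨
    ∃ γ ∈ C, w = col 0 n γ}

variable {n : ℕ} {G : ℕ → Set K} {C : Set K} {S : Set (ℕ → K)} {γ : K}

theorem exists_edge_of_col_mem_span (hS : S ⊆ chordedPathColumns n G C)
    (hC : ∀ δ ∈ C, col 0 n δ ∉ S) (hγ : col 0 n γ ∈ Submodule.span K S)
    (h0 : Pi.single 0 1 ∉ Submodule.span K S) {i : ℕ} (hi : i < n) :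
    ∃ δ ∈ G i, col i (i + 1) δ ∈ S := by
  by_contra! hcut
  obtain ⟨f, hf0, hf⟩ := Submodule.exists_le_ker_of_notMem h0
  -- Nothing in `S` crosses the cut between `i` and `i + 1`, so truncating at `i` keeps `f`
  -- vanishing on `S`.
  have hker : Submodule.span K S ≤ LinearMap.ker (f ∘ₗ truncate K i) := by
    refine Submodule.span_le.2 fun w hw => ?_
    have hfw : f w = 0 := hf (Submodule.subset_span hw)
    change f (truncate K i w) = 0
    rcases hS hw with ⟨j, rfl⟩ | ⟨j, -, δ, hδ, rfl⟩ | ⟨δ, hδ, rfl⟩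
    · rcases le_or_gt j i with hj | hj
      · rwa [truncate_single_of_le hj]
      · rw [truncate_single_of_lt hj, map_zero]
    · rw [col_of_ne j.succ_ne_self.symm, map_sub, map_smul]
      rcases lt_trichotomy j i with hj | rfl | hj
      · rwa [truncate_single_of_le hj.le, truncate_single_of_le hj,
          ← col_of_ne j.succ_ne_self.symm]
      · exact absurd hw (hcut δ hδ)
      · rw [truncate_single_of_lt hj, truncate_single_of_lt (hj.trans j.lt_succ_self),
          smul_zero, sub_zero, map_zero]
    · exact absurd hw (hC δ hδ)
  have htrunc : (f ∘ₗ truncate K i) (col 0 n γ) = 0 := hker hγ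
  rw [map_col_eq_zero_iff (by lia), LinearMap.comp_apply, LinearMap.comp_apply,
    truncate_single_of_le i.zero_le, truncate_single_of_lt hi, map_zero, mul_zero] at htrunc
  exact hf0 htrunc

theorem map_single_zero_eq_prod_mul {f : (ℕ → K) →ₗ[K] K} {c : ℕ → K}
    (hc : ∀ i < n, f (col i (i + 1) (c i)) = 0) :
    f (Pi.single 0 1) = (∏ i ∈ Finset.range n, c i) * f (Pi.single n 1) := by
  induction n with
  | zero => simp
  | succ n ih =>
    rw [ih fun i hi => hc i (hi.trans n.lt_succ_self), Finset.prod_range_succ, mul_assoc,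
      (map_col_eq_zero_iff n.succ_ne_self.symm f _).1 (hc n n.lt_succ_self)]

theorem gain_mem_of_col_mem_span (hn : n ≠ 0) (hS : S ⊆ chordedPathColumns n G C)
    (hγ : col 0 n γ ∈ Submodule.span K S) (h0 : Pi.single 0 1 ∉ Submodule.span K S) :
    γ ∈ C ∪ ∏ i ∈ Finset.range n, G i := by
  -- A functional that kills `S` but not the loop at `0` is a potential: along an edge of gain `δ`
  -- its value is divided by `δ`.
  obtain ⟨f, hf0, hf⟩ := Submodule.exists_le_ker_of_notMem h0
  have hfS {w} (hw : w ∈ S) : f w = 0 := hf (Submodule.subset_span hw)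
  have hfγ := (map_col_eq_zero_iff hn.symm f γ).1 (hf hγ)
  have hfn : f (Pi.single n 1) ≠ 0 := fun h => hf0 (by rw [hfγ, h, mul_zero])
  by_cases! hC : ∃ δ ∈ C, col 0 n δ ∈ S
  · obtain ⟨δ, hδ, hδS⟩ := hC
    rw [(map_col_eq_zero_iff hn.symm f δ).1 (hfS hδS)] at hfγ
    exact Or.inl (mul_right_cancel₀ hfn hfγ ▸ hδ)
  · have hpath (i) (hi : i < n) : ∃ δ, δ ∈ G i ∧ col i (i + 1) δ ∈ S :=
      exists_edge_of_col_mem_span hS hC hγ h0 hi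
    choose! c hcG hcS using hpath
    rw [map_single_zero_eq_prod_mul fun i hi => hfS (hcS i hi)] at hfγ
    exact Or.inr ((mem_finsetProd _ _ _).2
      ⟨c, fun hi => hcG _ (Finset.mem_range.1 hi), mul_right_cancel₀ hfn hfγ⟩)

end Columns

section Gains

theorem exists_subset_of_mem_prod_pair {ι M : Type*} [CommMonoid M] {F : Finset ι} {g : ι → M}
    {x : M} (hx : x ∈ ∏ i ∈ F, ({1, g i} : Set M)) : ∃ T ⊆ F, x = ∏ i ∈ T, g i := by
  classical
  obtain ⟨c, hc, rfl⟩ := (mem_finsetProd _ _ _).1 hx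
  refine ⟨F.filter fun i => c i = g i, Finset.filter_subset _ _, ?_⟩
  rw [Finset.prod_filter]
  refine Finset.prod_congr rfl fun i hi => ?_
  split_ifs with h
  · exact h
  · exact (hc hi).resolve_right h

theorem pow_injOn_of_pow_ne_one {M : Type*} [MonoidWithZero M] [IsLeftCancelMulZero M]
    {a : M} (ha : a ≠ 0) {N : ℕ}
    (h : ∀ k : ℕ, 1 ≤ k → k ≤ N → a ^ k ≠ 1) : InjOn (a ^ ·) (Iic N) := by
  have key {k m : ℕ} (hm : m ≤ N) (hkm : k < m) : a ^ k ≠ a ^ m := fun he => by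
    refine h (m - k) (by lia) (by lia) (mul_left_cancel₀ (pow_ne_zero k ha) ?_)
    rw [← pow_add, Nat.add_sub_cancel' hkm.le, mul_one, he]
  intro k hk m hm he
  rcases lt_trichotomy k m with hlt | rfl | hlt
  · exact absurd he (key hm hlt)
  · rfl
  · exact absurd he.symm (key hk hlt)

/-- The exponent `d i` in the gain `β ^ d i` of the edge `f_{i + 1}` of `Δ(L, t, β)`. -/
def loopExponent (t i : ℕ) : ℕ := if i < t then t - 1 else t

theorem sum_range_loopExponent (t : ℕ) :
    ∑ i ∈ Finset.range (2 * t - 1), loopExponent t i = 2 * t * (t - 1) := by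
  rcases t with _ | r
  · rfl
  have hlow : ∑ i ∈ Finset.range (r + 1), loopExponent (r + 1) i = (r + 1) * r := by
    rw [Finset.sum_congr rfl fun i hi =>
      show loopExponent (r + 1) i = r from if_pos (Finset.mem_range.1 hi)]
    simp
  have hhigh : ∑ i ∈ Finset.range r, loopExponent (r + 1) (r + 1 + i) = r * (r + 1) := by
    rw [Finset.sum_congr rfl fun i _ =>
      show loopExponent (r + 1) (r + 1 + i) = r + 1 from if_neg (by lia)]
    simp
  rw [show 2 * (r + 1) - 1 = r + 1 + r by lia, Finset.sum_range_add, hlow, hhigh,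
    Nat.add_sub_cancel]
  ring

/-- A set of exponents containing those of all gains carried by `Δ(L, t, β)` between its end
vertices. By its second condition the only powers of `β` with an exponent up to `t` are the gains
of `x`, `y` and `z`. -/
def loopExponents (t : ℕ) : Set ℕ :=
  {m | m ≤ 2 * t * (t - 1) ∧ (m ≤ t → m = 0 ∨ m = t - 1 ∨ m = t)}

theorem sum_loopExponent_mem {t : ℕ} {T : Finset ℕ} (hT : T ⊆ Finset.range (2 * t - 1)) :
    ∑ i ∈ T, loopExponent t i ∈ loopExponents t := by
  refine ⟨sum_range_loopExponent t ▸ Finset.sum_le_sum_of_subset hT, fun hle => ?_⟩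
  obtain hzero | hone | htwo : T.card = 0 ∨ T.card = 1 ∨ 2 ≤ T.card := by lia
  · simp [Finset.card_eq_zero.1 hzero]
  · obtain ⟨i, rfl⟩ := Finset.card_eq_one.1 hone
    rw [Finset.sum_singleton, loopExponent]
    split_ifs <;> simp
  · have hcard : T.card ≤ 2 * t - 1 := by simpa using Finset.card_le_card hT
    have hlow : T.card * (t - 1) ≤ ∑ i ∈ T, loopExponent t i :=
      Finset.card_nsmul_le_sum _ _ _ fun i _ => by unfold loopExponent; split_ifs <;> lia
    have hmul : 2 * (t - 1) ≤ T.card * (t - 1) := Nat.mul_le_mul_right _ htwo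
    lia

theorem mul_pred_mem_loopExponents (t : ℕ) : t * (t - 1) ∈ loopExponents t := by
  refine ⟨Nat.mul_le_mul_right _ (by lia), fun hle => ?_⟩
  rcases t.eq_zero_or_pos with rfl | ht
  · simp
  · have : t - 1 ≤ 1 := Nat.le_of_mul_le_mul_left (by rwa [mul_one]) ht
    obtain rfl | rfl : t = 1 ∨ t = 2 := by lia
    all_goals simp

theorem le_two_mul_mul_pred {t : ℕ} (ht : 2 ≤ t) : t ≤ 2 * t * (t - 1) :=
  (Nat.le_mul_of_pos_right t (by lia)).trans
    (Nat.mul_le_mul_right (t - 1) (Nat.le_mul_of_pos_left t two_pos))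

variable {K : Type*} [Field K] {s t : ℕ} {Y : Set (AmalEdge s t)} {a γ : K}

theorem hoopVec_image_subset (hY : Y ⊆ {e | inHoop e}) :
    hoopVec K a s t '' Y ⊆
      chordedPathColumns s (fun _ => {1, a}) {γ | ∃ k ≤ s, γ = a ^ k} := by
  rintro _ ⟨e, he, rfl⟩
  cases e with
  | a => exact Or.inl ⟨0, col_self _ _⟩
  | b => exact Or.inl ⟨s, col_self _ _⟩
  | hloop i => exact Or.inl ⟨i + 1, col_self _ _⟩
  | hx i => exact Or.inr (Or.inl ⟨i, i.2, 1, Or.inl rfl, rfl⟩)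
  | hy i => exact Or.inr (Or.inl ⟨i, i.2, a, Or.inr rfl, rfl⟩)
  | x => exact Or.inr (Or.inr ⟨1, ⟨0, s.zero_le, (pow_zero a).symm⟩, rfl⟩)
  | y => exact Or.inr (Or.inr ⟨a ^ (s - 1), ⟨s - 1, s.sub_le 1, rfl⟩, rfl⟩)
  | z => exact Or.inr (Or.inr ⟨a ^ s, ⟨s, le_rfl, rfl⟩, rfl⟩)
  | g | lloop _ | le _ | lf _ => exact (hY he).elim

theorem exists_gain_eq_pow_of_mem_span_hoopVec (hs : s ≠ 0) (hY : Y ⊆ {e | inHoop e})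
    (hγ : col 0 s γ ∈ Submodule.span K (hoopVec K a s t '' Y))
    (h0 : Pi.single 0 1 ∉ Submodule.span K (hoopVec K a s t '' Y)) :
    ∃ k ≤ s, γ = a ^ k := by
  refine (gain_mem_of_col_mem_span hs (hoopVec_image_subset hY) hγ h0).elim id fun hpath => ?_
  obtain ⟨T, hT, rfl⟩ := exists_subset_of_mem_prod_pair hpath
  exact ⟨T.card, by simpa using Finset.card_le_card hT, Finset.prod_const a⟩

theorem loopVec_image_subset (ht : 2 ≤ t) (hY : Y ⊆ {e | inLoopGraph e}) :
    loopVec K a s t '' Y ⊆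
      chordedPathColumns (2 * t - 1) (fun i => {1, a ^ loopExponent t i})
        {γ | ∃ m ∈ loopExponents t, γ = a ^ m} := by
  have hle := le_two_mul_mul_pred ht
  rintro _ ⟨e, he, rfl⟩
  cases e with
  | a => exact Or.inl ⟨0, col_self _ _⟩
  | b => exact Or.inl ⟨2 * t - 1, col_self _ _⟩
  | lloop i => exact Or.inl ⟨i + 1, col_self _ _⟩
  | le i => exact Or.inr (Or.inl ⟨i, i.2, 1, Or.inl rfl, rfl⟩)
  | lf i =>
    exact Or.inr (Or.inl ⟨i, i.2, _, Or.inr (apply_ite (a ^ ·) _ _ _).symm, rfl⟩)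
  | x => exact Or.inr (Or.inr ⟨1, ⟨0, by simp [loopExponents], (pow_zero a).symm⟩, rfl⟩)
  | y => exact Or.inr (Or.inr ⟨_, ⟨t - 1, ⟨t.pred_le.trans hle, by simp⟩, rfl⟩, rfl⟩)
  | z => exact Or.inr (Or.inr ⟨_, ⟨t, ⟨hle, by simp⟩, rfl⟩, rfl⟩)
  | g => exact Or.inr (Or.inr ⟨_, ⟨t * (t - 1), mul_pred_mem_loopExponents t, rfl⟩, rfl⟩)
  | hloop _ | hx _ | hy _ => exact (hY he).elim

theorem exists_gain_eq_pow_of_mem_span_loopVec (ht : 2 ≤ t) (hY : Y ⊆ {e | inLoopGraph e})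
    (hγ : col 0 (2 * t - 1) γ ∈ Submodule.span K (loopVec K a s t '' Y))
    (h0 : Pi.single 0 1 ∉ Submodule.span K (loopVec K a s t '' Y)) :
    ∃ m ∈ loopExponents t, γ = a ^ m := by
  refine (gain_mem_of_col_mem_span (by lia) (loopVec_image_subset ht hY) hγ h0).elim id
    fun hpath => ?_
  obtain ⟨T, hT, rfl⟩ := exists_subset_of_mem_prod_pair hpath
  exact ⟨_, sum_loopExponent_mem hT, Finset.prod_pow_eq_pow_sum T _ a⟩

end Gains

theorem smul_add_smul_mem_of_forall_sub_smul_mem {K V : Type*} [DivisionRing K]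
    [AddCommGroup V] [Module K V] {I U R : Submodule K V} {e f : V} {p q : K} (hI : I ≤ U)
    (he : e ∈ U → e ∈ R) (hf : f ∈ U → f ∈ R) (hef : e ∉ U → ∀ γ : K, e - γ • f ∈ I → e - γ • f ∈ R)
    (h : p • e + q • f ∈ I) : p • e + q • f ∈ R := by
  have mem_of_smul_mem : q • f ∈ U → q • f ∈ R := by
    rcases eq_or_ne q 0 with rfl | hq
    · simp
    · exact fun hqf => R.smul_mem q (hf ((U.smul_mem_iff hq).1 hqf))
  by_cases heU : e ∈ U
  · exact R.add_mem (R.smul_mem p (he heU))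
      (mem_of_smul_mem ((U.add_mem_iff_right (U.smul_mem p heU)).1 (hI h)))
  rcases eq_or_ne p 0 with rfl | hp
  · rw [zero_smul, zero_add] at h ⊢
    exact mem_of_smul_mem (hI h)
  · have hscale : p • e + q • f = p • (e - (-(p⁻¹ * q)) • f) := by
      rw [neg_smul, sub_neg_eq_add, smul_add, smul_smul, mul_inv_cancel_left₀ hp]
    rw [hscale] at h ⊢
    exact R.smul_mem p (hef heU _ ((I.smul_mem_iff hp).1 h))

section Gluing

open Function

variable {K : Type*} [Field K]

/-- The vertex of the glued graph that comes from the vertex `v_{i + 1}` of `Δ`, where the end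
vertices `0` and `n` are identified with the end vertices `0` and `s` of `Γ`. The vertices of `Γ`
are the `Sum.inl i`. -/
def glueVertex (s n i : ℕ) : ℕ ⊕ ℕ :=
  if i = 0 then .inl 0 else if i = n then .inl s else .inr i

theorem glueVertex_zero (s n : ℕ) : glueVertex s n 0 = .inl 0 := if_pos rfl

theorem glueVertex_end {n : ℕ} (s : ℕ) (hn : n ≠ 0) : glueVertex s n n = .inl s := by
  rw [glueVertex, if_neg hn, if_pos rfl]

theorem glueVertex_injective {s : ℕ} (n : ℕ) (hs : s ≠ 0) :
    Injective (glueVertex s n) := by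
  intro i j h
  unfold glueVertex at h
  split_ifs at h <;> simp_all

theorem inl_notMem_range_glueVertex {s n i : ℕ} (h0 : i ≠ 0) (hs : i ≠ s) :
    .inl i ∉ range (glueVertex s n) := by
  rintro ⟨j, hj⟩
  unfold glueVertex at hj
  split_ifs at hj <;> simp_all

variable {ι V : Type*}

theorem extendByZero_injective {ρ : ι → V} (hρ : Injective ρ) :
    Injective (ExtendByZero.linearMap K ρ) :=
  extend_injective hρ (0 : V → K)

theorem extendByZero_single [DecidableEq ι] [DecidableEq V] {ρ : ι → V} (hρ : Injective ρ)
    (i : ι) :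
    ExtendByZero.linearMap K ρ (Pi.single i 1) = Pi.single (ρ i) 1 := by
  ext j
  rw [ExtendByZero.linearMap_apply]
  by_cases hj : ∃ i, ρ i = j
  · obtain ⟨i, rfl⟩ := hj
    simp [hρ.extend_apply, Pi.single_apply, hρ.eq_iff]
  · rw [extend_apply' _ _ _ hj, Pi.single_eq_of_ne fun h => hj ⟨i, h.symm⟩,
      Pi.zero_apply]

theorem extendByZero_col_self [DecidableEq V] {ρ : ℕ → V} (hρ : Injective ρ) (u : ℕ)
    (γ : K) : ExtendByZero.linearMap K ρ (col u u γ) = Pi.single (ρ u) 1 := by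
  rw [col_self, extendByZero_single hρ]

theorem extendByZero_col_of_ne [DecidableEq V] {ρ : ℕ → V} (hρ : Injective ρ) {u v : ℕ}
    (h : u ≠ v) (γ : K) :
    ExtendByZero.linearMap K ρ (col u v γ) =
      Pi.single (ρ u) 1 - γ • Pi.single (ρ v) 1 := by
  rw [col_of_ne h, map_sub, map_smul, extendByZero_single hρ, extendByZero_single hρ]

theorem extendByZero_col_congr {ρ σ : ℕ → V} (hρ : Injective ρ)
    (hσ : Injective σ) {u v u' v' : ℕ} (hu : ρ u = σ u') (hv : ρ v = σ v') (γ : K) :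
    ExtendByZero.linearMap K ρ (col u v γ) =
      ExtendByZero.linearMap K σ (col u' v' γ) := by
  classical
  have huv : u = v ↔ u' = v' := by rw [← hρ.eq_iff, ← hσ.eq_iff, hu, hv]
  by_cases h : u = v
  · obtain rfl := h
    obtain rfl := huv.1 rfl
    rw [extendByZero_col_self hρ, extendByZero_col_self hσ, hu]
  · rw [extendByZero_col_of_ne hρ h, extendByZero_col_of_ne hσ (mt huv.2 h), hu, hv]

theorem extendByZero_inl_eq_of_eq_glue {s n : ℕ} (hs : s ≠ 0) {v w : ℕ → K}
    (h : ExtendByZero.linearMap K .inl v =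
      ExtendByZero.linearMap K (glueVertex s n) w) :
    ExtendByZero.linearMap K .inl v =
      v 0 • Pi.single (.inl 0 : ℕ ⊕ ℕ) 1 + v s • Pi.single (.inl s) 1 := by
  have hv : v = v 0 • Pi.single 0 1 + v s • Pi.single s 1 := by
    ext i
    by_cases h0 : i = 0
    · simp [h0, hs.symm]
    by_cases hi : i = s
    · simp [hi, hs]
    have hvi := congr_fun h (.inl i)
    rw [ExtendByZero.linearMap_apply, ExtendByZero.linearMap_apply,
      Sum.inl_injective.extend_apply,
      extend_apply' _ _ _ (inl_notMem_range_glueVertex h0 hi)] at hvi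
    simp [hvi, h0, hi]
  conv_lhs =>
    rw [hv, map_add, map_smul, map_smul, extendByZero_single Sum.inl_injective,
      extendByZero_single Sum.inl_injective]

end Gluing

section GluedGainGraph

open Function

variable {K : Type*} [Field K]

instance AmalEdge.instFinite (s t : ℕ) : Finite (AmalEdge s t) := by
  have hcover : (univ : Set (AmalEdge s t)) ⊆ {.a, .b, .x, .y, .z, .g} ∪ range .hloop ∪
      range .hx ∪ range .hy ∪ range .lloop ∪ range .le ∪ range .lf := by
    intro e _
    cases e <;> simp
  refine finite_univ_iff.1 (Finite.subset ?_ hcover)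
  simp only [finite_union, finite_range, and_true]
  exact toFinite _

variable {a : K} {s : ℕ} {Y : Set (AmalEdge s s)}

open Classical in
/-- The columns of the gain graph obtained from `Γ(K, s, α)` and `Δ(K, s, α)` by identifying `u₁`
with `v₁` and `u_{s+1}` with `v_{2s}`. -/
noncomputable def amalgamVec (K : Type*) [Field K] (a : K) (s : ℕ) (e : AmalEdge s s) :
    ℕ ⊕ ℕ → K :=
  if inHoop e then ExtendByZero.linearMap K .inl (hoopVec K a s s e)
  else ExtendByZero.linearMap K (glueVertex s (2 * s - 1)) (loopVec K a s s e)

theorem eqOn_amalgamVec_hoop :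
    EqOn (ExtendByZero.linearMap K .inl ∘ hoopVec K a s s) (amalgamVec K a s)
      {e | inHoop e} :=
  fun _ he => (if_pos he).symm

theorem eqOn_amalgamVec_loop (hs : s ≠ 0) :
    EqOn (ExtendByZero.linearMap K (glueVertex s (2 * s - 1)) ∘ loopVec K a s s)
      (amalgamVec K a s) {e | inLoopGraph e} := by
  have hzero := glueVertex_zero s (2 * s - 1)
  have hend := glueVertex_end s (n := 2 * s - 1) (by lia)
  have hinl := Sum.inl_injective (α := ℕ) (β := ℕ)
  have hglue := glueVertex_injective (2 * s - 1) hs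
  intro e he
  cases e with
  | a => exact (extendByZero_col_congr hglue hinl hzero hzero _).trans (if_pos trivial).symm
  | b => exact (extendByZero_col_congr hglue hinl hend hend _).trans (if_pos trivial).symm
  | x | y | z => exact (extendByZero_col_congr hglue hinl hzero hend _).trans (if_pos trivial).symm
  | g | lloop _ | le _ | lf _ => exact (if_neg id).symm
  | hloop _ | hx _ | hy _ => exact he.elim

theorem amalgamVec_a : amalgamVec K a s .a = Pi.single (.inl 0) 1 :=
  (if_pos trivial).trans (extendByZero_col_self Sum.inl_injective 0 a)

theorem amalgamVec_b : amalgamVec K a s .b = Pi.single (.inl s) 1 :=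
  (if_pos trivial).trans (extendByZero_col_self Sum.inl_injective s a)

theorem IsHoopMatroid.represents {M : Matroid (AmalEdge s s)} (hM : IsHoopMatroid K a s s M) :
    Represents K (amalgamVec K a s) M := by
  have hvec : Represents K (hoopVec K a s s) M := fun I hI =>
    (hM.2 I).trans (and_iff_right (hM.1 ▸ hI))
  exact (hvec.map (extendByZero_injective Sum.inl_injective)).congr (hM.1 ▸ eqOn_amalgamVec_hoop)

theorem IsLoopMatroid.represents (hs : s ≠ 0) {M : Matroid (AmalEdge s s)}
    (hM : IsLoopMatroid K a s s M) : Represents K (amalgamVec K a s) M := by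
  have hvec : Represents K (loopVec K a s s) M := fun I hI =>
    (hM.2 I).trans (and_iff_right (hM.1 ▸ hI))
  exact (hvec.map (extendByZero_injective (glueVertex_injective _ hs))).congr
    (hM.1 ▸ eqOn_amalgamVec_loop hs)

theorem span_amalgamVec_hoop (hY : Y ⊆ {e | inHoop e}) :
    Submodule.span K (amalgamVec K a s '' Y) =
      (Submodule.span K (hoopVec K a s s '' Y)).map
        (ExtendByZero.linearMap K .inl) := by
  rw [← (eqOn_amalgamVec_hoop.mono hY).image_eq, image_comp, Submodule.map_span]

theorem span_amalgamVec_loop (hs : s ≠ 0) (hY : Y ⊆ {e | inLoopGraph e}) :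
    Submodule.span K (amalgamVec K a s '' Y) =
      (Submodule.span K (loopVec K a s s '' Y)).map
        (ExtendByZero.linearMap K (glueVertex s (2 * s - 1))) := by
  rw [← ((eqOn_amalgamVec_loop hs).mono hY).image_eq, image_comp, Submodule.map_span]

theorem extendByZero_mem_span_amalgamVec_hoop_iff (hY : Y ⊆ {e | inHoop e}) {w : ℕ → K} :
    ExtendByZero.linearMap K .inl w ∈ Submodule.span K (amalgamVec K a s '' Y) ↔
      w ∈ Submodule.span K (hoopVec K a s s '' Y) := by
  rw [span_amalgamVec_hoop hY]
  exact (extendByZero_injective Sum.inl_injective).mem_set_image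

theorem extendByZero_mem_span_amalgamVec_loop_iff (hs : s ≠ 0) (hY : Y ⊆ {e | inLoopGraph e})
    {w : ℕ → K} :
    ExtendByZero.linearMap K (glueVertex s (2 * s - 1)) w ∈
        Submodule.span K (amalgamVec K a s '' Y) ↔
      w ∈ Submodule.span K (loopVec K a s s '' Y) := by
  rw [span_amalgamVec_loop hs hY]
  exact (extendByZero_injective (glueVertex_injective _ hs)).mem_set_image

theorem gain_eq_of_mem_span_hoopVec_of_mem_span_loopVec (hs : 2 ≤ s) (ha : a ≠ 0)
    (horder : ∀ k : ℕ, 1 ≤ k → k ≤ 2 * s * (s - 1) → a ^ k ≠ 1) {γ : K}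
    {Y₁ Y₂ : Set (AmalEdge s s)} (hY₁ : Y₁ ⊆ {e | inHoop e}) (hY₂ : Y₂ ⊆ {e | inLoopGraph e})
    (h₁ : col 0 s γ ∈ Submodule.span K (hoopVec K a s s '' Y₁))
    (h₂ : col 0 (2 * s - 1) γ ∈ Submodule.span K (loopVec K a s s '' Y₂))
    (h0₁ : Pi.single 0 1 ∉ Submodule.span K (hoopVec K a s s '' Y₁))
    (h0₂ : Pi.single 0 1 ∉ Submodule.span K (loopVec K a s s '' Y₂)) :
    γ = 1 ∨ γ = a ^ (s - 1) ∨ γ = a ^ s := by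
  obtain ⟨k, hk, rfl⟩ := exists_gain_eq_pow_of_mem_span_hoopVec (by lia) hY₁ h₁ h0₁
  obtain ⟨m, hm, hkm⟩ := exists_gain_eq_pow_of_mem_span_loopVec hs hY₂ h₂ h0₂
  obtain rfl : k = m :=
    pow_injOn_of_pow_ne_one ha horder (hk.trans (le_two_mul_mul_pred hs)) hm.1 hkm
  obtain rfl | rfl | rfl := hm.2 hk
  · exact Or.inl (pow_zero a)
  · exact Or.inr (Or.inl rfl)
  · exact Or.inr (Or.inr rfl)

theorem exists_common_edge_of_mem_inf (hs : 2 ≤ s) (ha : a ≠ 0)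
    (horder : ∀ k : ℕ, 1 ≤ k → k ≤ 2 * s * (s - 1) → a ^ k ≠ 1) {γ : K}
    (hγ : Pi.single (.inl 0 : ℕ ⊕ ℕ) 1 - γ • Pi.single (.inl s) 1 ∈
      Submodule.span K (amalgamVec K a s '' (Y ∩ {e | inHoop e})) ⊓
        Submodule.span K (amalgamVec K a s '' (Y ∩ {e | inLoopGraph e})))
    (h0 : Pi.single (.inl 0) 1 ∉ Submodule.span K (amalgamVec K a s '' Y)) :
    ∃ e : AmalEdge s s, inHoop e ∧ inLoopGraph e ∧
      amalgamVec K a s e = Pi.single (.inl 0 : ℕ ⊕ ℕ) 1 - γ • Pi.single (.inl s) 1 := by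
  have hs0 : s ≠ 0 := by lia
  have hinl := Sum.inl_injective (α := ℕ) (β := ℕ)
  have hglue := glueVertex_injective (2 * s - 1) hs0
  have hzero := glueVertex_zero s (2 * s - 1)
  have hend := glueVertex_end s (n := 2 * s - 1) (by lia)
  have h0Y (Z) : Pi.single (.inl 0) 1 ∉ Submodule.span K (amalgamVec K a s '' (Y ∩ Z)) :=
    fun h => h0 (Submodule.span_mono (image_mono inter_subset_left) h)
  rw [← extendByZero_col_of_ne hinl hs0.symm] at hγ ⊢
  obtain ⟨h₁, h₂⟩ := Submodule.mem_inf.1 hγ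
  rw [extendByZero_mem_span_amalgamVec_hoop_iff inter_subset_right] at h₁
  rw [extendByZero_col_congr hinl hglue hzero.symm hend.symm,
    extendByZero_mem_span_amalgamVec_loop_iff hs0 inter_subset_right] at h₂
  have h0₁ := h0Y {e | inHoop e}
  rw [← extendByZero_single hinl,
    extendByZero_mem_span_amalgamVec_hoop_iff inter_subset_right] at h0₁
  have h0₂ := h0Y {e | inLoopGraph e}
  rw [← hzero, ← extendByZero_single hglue,
    extendByZero_mem_span_amalgamVec_loop_iff hs0 inter_subset_right] at h0₂
  obtain rfl | rfl | rfl := gain_eq_of_mem_span_hoopVec_of_mem_span_loopVec hs ha horder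
    inter_subset_right inter_subset_right h₁ h₂ h0₁ h0₂
  · exact ⟨.x, trivial, trivial, if_pos trivial⟩
  · exact ⟨.y, trivial, trivial, if_pos trivial⟩
  · exact ⟨.z, trivial, trivial, if_pos trivial⟩

theorem exists_eq_smul_add_smul_of_mem_inf (hs : s ≠ 0) {p : ℕ ⊕ ℕ → K}
    (hp : p ∈ Submodule.span K (amalgamVec K a s '' (Y ∩ {e | inHoop e})) ⊓
      Submodule.span K (amalgamVec K a s '' (Y ∩ {e | inLoopGraph e}))) :
    ∃ c d : K, p = c • Pi.single (.inl 0 : ℕ ⊕ ℕ) 1 + d • Pi.single (.inl s : ℕ ⊕ ℕ) 1 := by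
  rw [span_amalgamVec_hoop inter_subset_right, span_amalgamVec_loop hs inter_subset_right] at hp
  obtain ⟨⟨v, -, rfl⟩, w, -, hw⟩ := hp
  exact ⟨v 0, v s, extendByZero_inl_eq_of_eq_glue hs hw.symm⟩

theorem modularOnFlats_amalgamVec (hs : 2 ≤ s) (ha : a ≠ 0)
    (horder : ∀ k : ℕ, 1 ≤ k → k ≤ 2 * s * (s - 1) → a ^ k ≠ 1) :
    ModularOnFlats K (amalgamVec K a s) {e | inHoop e} {e | inLoopGraph e} := by
  intro Y _ hflat p hp
  have common {e : AmalEdge s s} (h₁ : inHoop e) (h₂ : inLoopGraph e)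
      (he : amalgamVec K a s e ∈ Submodule.span K (amalgamVec K a s '' Y)) :
      amalgamVec K a s e ∈
        Submodule.span K (amalgamVec K a s '' (Y ∩ ({e | inHoop e} ∩ {e | inLoopGraph e}))) :=
    Submodule.subset_span ⟨e, ⟨hflat e (Or.inl h₁) he, h₁, h₂⟩, rfl⟩
  have hle : Submodule.span K (amalgamVec K a s '' (Y ∩ {e | inHoop e})) ⊓
      Submodule.span K (amalgamVec K a s '' (Y ∩ {e | inLoopGraph e})) ≤
        Submodule.span K (amalgamVec K a s '' Y) :=
    inf_le_left.trans (Submodule.span_mono (image_mono inter_subset_left))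
  obtain ⟨c, d, rfl⟩ := exists_eq_smul_add_smul_of_mem_inf (by lia) hp
  refine smul_add_smul_mem_of_forall_sub_smul_mem hle ?_ ?_ (fun h0 γ hγ => ?_) hp
  · rw [← amalgamVec_a]
    exact common trivial trivial
  · rw [← amalgamVec_b]
    exact common trivial trivial
  · obtain ⟨e, h₁, h₂, he⟩ := exists_common_edge_of_mem_inf hs ha horder hγ h0
    rw [← he] at hγ ⊢
    exact common h₁ h₂ (hle hγ)

end GluedGainGraph

theorem amalgam_representable_general (K : Type) [Field K] (s : ℕ) (hs : 2 ≤ s)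
    (a : K) (ha : a ≠ 0)
    (horder : ∀ k : ℕ, 1 ≤ k → k ≤ 2 * s * (s - 1) → a ^ k ≠ 1)
    (M₁ M₂ A : Matroid (AmalEdge s s))
    (hM₁ : IsHoopMatroid K a s s M₁)
    (hM₂ : IsLoopMatroid K a s s M₂)
    (hA : IsProperAmalgam M₁ M₂ A) :
    RepOver K A := by
  have h₁ : Represents K (amalgamVec K a s) M₁ := hM₁.represents
  have h₂ : Represents K (amalgamVec K a s) M₂ := hM₂.represents (by lia)
  have hmod : ModularOnFlats K (amalgamVec K a s) M₁.E M₂.E :=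
    hM₁.1 ▸ hM₂.1 ▸ modularOnFlats_amalgamVec hs ha horder
  exact ⟨ℕ ⊕ ℕ, amalgamVec K a s, hA.represents h₁ h₂ hmod⟩

/-- Let `K` be a field, `s ≥ 3`, and `α ∈ K \ {0}` of multiplicative order greater
than `2s(s-1)`. Then the proper amalgam, along the common rank-2 five-point line
`ℓ = {a, b, x, y, z}`, of the hoop matroid `M(Γ(K, s, α))` and the loop matroid
`M(Δ(K, s, α))` is representable over `K`. -/
theorem amalgam_representable (K : Type) [Field K] (s : ℕ) (hs : 3 ≤ s)
    (a : K) (ha : a ≠ 0)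
    (horder : ∀ k : ℕ, 1 ≤ k → k ≤ 2 * s * (s - 1) → a ^ k ≠ 1)
    (M₁ M₂ A : Matroid (AmalEdge s s))
    (hM₁ : IsHoopMatroid K a s s M₁)
    (hM₂ : IsLoopMatroid K a s s M₂)
    (hA : IsProperAmalgam M₁ M₂ A) :
    RepOver K A :=
  amalgam_representable_general K s (by lia) a ha horder M₁ M₂ A hM₁ hM₂ hA
end
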